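/- Let f : ℝ^n → ℝ^r be a smooth function on a neighborhood of a closed ball B̄(0,R), vanishing transversally, with zero set Z = f^{−1}(0) a compact subset of the open ball B(0,R). Then there exists ε > 0 such that any smooth function g with ‖g − f‖_{C^1(B̄(0,R))} < ε also vanishes transversally on B(0,R) and its zero set in B(0,R) is diffeomorphic to Z. -/

import Mathlib

open Metric Set
open Filter Topology
open scoped ContDiff

section ThomAux

variable {E F : Type*} [NormedAddCommGroup E] [InnerProductSpace ℝ E] [FiniteDimensional ℝ E]
  [NormedAddCommGroup F] [InnerProductSpace ℝ F] [FiniteDimensional ℝ F]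

/-- The adjoint as a real-linear map. -/
noncomputable def thomAdj (E F : Type*) [NormedAddCommGroup E] [InnerProductSpace ℝ E]
    [FiniteDimensional ℝ E]
    [NormedAddCommGroup F] [InnerProductSpace ℝ F] [FiniteDimensional ℝ F] :
    (E →L[ℝ] F) →ₗ[ℝ] (F →L[ℝ] E) :=
  have := FiniteDimensional.complete ℝ E
  have := FiniteDimensional.complete ℝ F
  { toFun := fun D => ContinuousLinearMap.adjoint D
    map_add' := fun D D' => map_add _ D D'
    map_smul' := fun c D => by simp }

theorem thomAdj_inner (D : E →L[ℝ] F) (v : F) (u : E) :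
    inner ℝ (thomAdj E F D v) u = inner ℝ v (D u) := by
  have := FiniteDimensional.complete ℝ E
  have := FiniteDimensional.complete ℝ F
  exact ContinuousLinearMap.adjoint_inner_left D u v

theorem thomAdj_contDiff {m : WithTop ℕ∞} : ContDiff ℝ m (thomAdj E F) :=
  (LinearMap.toContinuousLinearMap (thomAdj E F)).contDiff

/-- The Gram operator `D D^*`. -/
noncomputable def thomGram (D : E →L[ℝ] F) : F →L[ℝ] F := D.comp (thomAdj E F D)

theorem thomGram_contDiff {m : WithTop ℕ∞} :
    ContDiff ℝ m (thomGram : (E →L[ℝ] F) → (F →L[ℝ] F)) :=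
  contDiff_id.clm_comp thomAdj_contDiff

theorem thom_isUnit_of_injective (T : F →L[ℝ] F) (h : Function.Injective T) : IsUnit T := by
  have h2 : Function.Bijective T := ⟨h, LinearMap.surjective_of_injective (f := T.toLinearMap) h⟩
  let e := (LinearEquiv.ofBijective T.toLinearMap h2).toContinuousLinearEquiv
  refine ⟨ContinuousLinearEquiv.toUnit e, ?_⟩
  ext x
  rfl

theorem thom_surj_iff (D : E →L[ℝ] F) : Function.Surjective D ↔ IsUnit (thomGram D) := by
  constructor
  · intro h
    apply thom_isUnit_of_injective
    rw [injective_iff_map_eq_zero]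
    intro v hv
    have h1 : inner ℝ (thomAdj E F D v) (thomAdj E F D v) = 0 := by
      rw [thomAdj_inner]
      change inner ℝ v (thomGram D v) = 0
      rw [hv, inner_zero_right]
    have h2 : thomAdj E F D v = 0 := inner_self_eq_zero.1 h1
    obtain ⟨u, rfl⟩ := h v
    have h3 := thomAdj_inner D (D u) u
    rw [h2, inner_zero_left] at h3
    exact inner_self_eq_zero.1 h3.symm
  · rintro ⟨u, hu⟩ y
    refine ⟨thomAdj E F D ((↑u⁻¹ : F →L[ℝ] F) y), ?_⟩
    change thomGram D ((↑u⁻¹ : F →L[ℝ] F) y) = y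
    rw [← hu]
    change ((↑u * ↑u⁻¹ : F →L[ℝ] F)) y = y
    simp

theorem thom_isOpen_surj : IsOpen {D : E →L[ℝ] F | Function.Surjective D} := by
  have := FiniteDimensional.complete ℝ F
  have : {D : E →L[ℝ] F | Function.Surjective D} = thomGram ⁻¹' {T | IsUnit T} := by
    ext D; exact thom_surj_iff D
  rw [this]
  exact Units.isOpen.preimage (thomGram_contDiff (m := 0)).continuous

/-- Smooth right inverse. -/
noncomputable def thomRinv (D : E →L[ℝ] F) : F →L[ℝ] E :=
  (thomAdj E F D).comp (Ring.inverse (thomGram D))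

theorem thomRinv_spec (D : E →L[ℝ] F) (h : Function.Surjective D) (v : F) :
    D (thomRinv D v) = v := by
  have h1 := (thom_surj_iff D).1 h
  have := Ring.mul_inverse_cancel _ h1
  exact congrArg (fun T : F →L[ℝ] F => T v) this

theorem thomRinv_contDiffAt {m : WithTop ℕ∞} (D : E →L[ℝ] F) (h : Function.Surjective D) :
    ContDiffAt ℝ m (thomRinv : (E →L[ℝ] F) → (F →L[ℝ] E)) D := by
  have := FiniteDimensional.complete ℝ F
  obtain ⟨u, hu⟩ := (thom_surj_iff D).1 h
  refine ContDiffAt.clm_comp thomAdj_contDiff.contDiffAt ?_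
  refine ContDiffAt.comp D (g := Ring.inverse) ?_ thomGram_contDiff.contDiffAt
  rw [← hu]
  exact contDiffAt_ringInverse ℝ u

/-- Global inverse function theorem on a set where the map is injective. -/
theorem thom_inverse {X : Type*} [NormedAddCommGroup X] [NormedSpace ℝ X] [CompleteSpace X]
    (Φ : X → X) (U : Set X) (hU : IsOpen U) (hinj : InjOn Φ U)
    (hc : ∀ p ∈ U, ContDiffAt ℝ ∞ Φ p)
    (hd : ∀ p ∈ U, ∃ e : X ≃L[ℝ] X, HasFDerivAt Φ (e : X →L[ℝ] X) p) :
    IsOpen (Φ '' U) ∧ ∃ Ψ : X → X, ∀ y ∈ Φ '' U, Ψ y ∈ U ∧ Φ (Ψ y) = y ∧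
      ContDiffAt ℝ ∞ Ψ y := by
  have hn : (∞ : WithTop ℕ∞) ≠ 0 := by simp
  have hop : IsOpen (Φ '' U) := by
    rw [isOpen_iff_mem_nhds]
    rintro _ ⟨p, hp, rfl⟩
    obtain ⟨e, he⟩ := hd p hp
    have := ((hc p hp).hasStrictFDerivAt' he hn).map_nhds_eq_of_equiv
    rw [← this]
    exact image_mem_map (hU.mem_nhds hp)
  refine ⟨hop, ?_⟩
  have hch : ∀ y, ∃ x, y ∈ Φ '' U → x ∈ U ∧ Φ x = y := by
    intro y
    by_cases h : y ∈ Φ '' U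
    · obtain ⟨x, hx, hxy⟩ := h
      exact ⟨x, fun _ => ⟨hx, hxy⟩⟩
    · exact ⟨y, fun h' => absurd h' h⟩
  choose Ψ hΨ using hch
  refine ⟨Ψ, fun y hy => ⟨(hΨ y hy).1, (hΨ y hy).2, ?_⟩⟩
  obtain ⟨p, hp, rfl⟩ := hy
  obtain ⟨e, he⟩ := hd p hp
  have hs := (hc p hp).hasStrictFDerivAt' he hn
  refine ((hc p hp).to_localInverse he hn).congr_of_eventuallyEq ?_
  filter_upwards [hs.eventually_right_inverse, hs.localInverse_tendsto (hU.mem_nhds hp),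
    hop.mem_nhds ⟨p, hp, rfl⟩] with y h1 h2 h3
  exact hinj (hΨ y h3).1 h2 ((hΨ y h3).2.trans h1.symm)

/-- Local solver. -/
theorem thom_solver (f : E → F) (hf : ContDiff ℝ ∞ f) (Ω : Set E)
    (hΩo : IsOpen Ω) (hΩ : ∀ x ∈ Ω, Function.Surjective (fderiv ℝ f x))
    (K : Set E) (hK : IsCompact K) (hKΩ : K ⊆ Ω) :
    ∃ (H : E × F → E) (V : Set (E × F)), IsOpen V ∧ (∀ x ∈ K, (x, (0 : F)) ∈ V) ∧
      (∀ p ∈ V, ContDiffAt ℝ ∞ H p ∧ f (p.1 + H p) = f p.1 + p.2) ∧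
      ∀ x, (x, (0 : F)) ∈ V → H (x, 0) = 0 := by
  have := FiniteDimensional.complete ℝ E
  have := FiniteDimensional.complete ℝ F
  have hn : (∞ : WithTop ℕ∞) ≠ 0 := by simp
  set A : E → (F →L[ℝ] E) := fun x => thomRinv (fderiv ℝ f x) with hA
  have hAc : ∀ x ∈ Ω, ContDiffAt ℝ ∞ A x := fun x hx =>
    ContDiffAt.comp x (thomRinv_contDiffAt _ (hΩ x hx))
      (hf.contDiffAt.fderiv_right (by simp))
  set Φ : E × F → E × F := fun p => (p.1, f (p.1 + A p.1 p.2) - f p.1) with hΦ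
  have hΦc : ∀ p : E × F, p.1 ∈ Ω → ContDiffAt ℝ ∞ Φ p := by
    intro p hp
    have h1 : ContDiffAt ℝ ∞ (fun p : E × F => A p.1) p :=
      ContDiffAt.comp p (g := A) (hAc _ hp) contDiffAt_fst
    refine contDiffAt_fst.prodMk (ContDiffAt.sub ?_ (hf.contDiffAt.comp p contDiffAt_fst))
    exact hf.contDiffAt.comp p (contDiffAt_fst.add (h1.clm_apply contDiffAt_snd))
  have hΦd : ∀ x ∈ Ω, HasFDerivAt Φ
      ((ContinuousLinearEquiv.refl ℝ (E × F) : (E × F) ≃L[ℝ] (E × F)) :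
        (E × F) →L[ℝ] (E × F)) (x, 0) := by
    intro x hx
    have hA1 : HasFDerivAt (fun p : E × F => A p.1)
        ((fderiv ℝ A x).comp (ContinuousLinearMap.fst ℝ E F)) (x, (0 : F)) :=
      HasFDerivAt.comp (g := A) (x, (0 : F))
        ((hAc x hx).differentiableAt hn).hasFDerivAt hasFDerivAt_fst
    have h2 := hA1.clm_apply (hasFDerivAt_snd (𝕜 := ℝ) (p := (x, (0 : F))))
    have h3 := (hasFDerivAt_fst (𝕜 := ℝ) (p := (x, (0 : F)))).add h2
    have hfx : ∀ y, HasFDerivAt f (fderiv ℝ f y) y := fun y =>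
      (hf.differentiable hn y).hasFDerivAt
    have h4 := HasFDerivAt.comp (g := f) (x, (0 : F)) (hfx _) h3
    have h5 := HasFDerivAt.comp (g := f) (x, (0 : F)) (hfx _)
      (hasFDerivAt_fst (𝕜 := ℝ) (p := (x, (0 : F))))
    have h6 := (hasFDerivAt_fst (𝕜 := ℝ) (p := (x, (0 : F)))).prodMk (h4.sub h5)
    refine h6.congr_fderiv ?_
    have hs : ∀ v, fderiv ℝ f x (A x v) = v := fun v => thomRinv_spec _ (hΩ x hx) v
    ext v <;> simp [hs]
  have hK0 : IsCompact (K ×ˢ ({0} : Set F)) := hK.prod isCompact_singleton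
  obtain ⟨t, ht, htinj⟩ : ∃ t ∈ 𝓝ˢ (K ×ˢ ({0} : Set F)), InjOn Φ t := by
    refine Set.InjOn.exists_mem_nhdsSet ?_ hK0 ?_ ?_
    · rintro ⟨x, v⟩ ⟨hx, hv⟩ ⟨x', v'⟩ ⟨hx', hv'⟩ h
      have := congrArg Prod.fst h
      simp only [mem_singleton_iff] at hv hv'
      simp_all
    · rintro ⟨x, v⟩ ⟨hx, hv⟩
      exact (hΦc _ (hKΩ hx)).continuousAt
    · rintro ⟨x, v⟩ ⟨hx, hv⟩
      simp only [mem_singleton_iff] at hv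
      subst hv
      have hs := (hΦc (x, 0) (hKΩ hx)).hasStrictFDerivAt' (hΦd x (hKΩ hx)) hn
      refine ⟨(hs.toOpenPartialHomeomorph Φ).source,
        (hs.toOpenPartialHomeomorph Φ).open_source.mem_nhds
          hs.mem_toOpenPartialHomeomorph_source, ?_⟩
      exact (hs.toOpenPartialHomeomorph Φ).injOn
  let W : Set (E × F) := {p | p.1 ∈ Ω ∧ ∃ e : (E × F) ≃L[ℝ] (E × F),
    HasFDerivAt Φ (e : (E × F) →L[ℝ] (E × F)) p}
  have hWn : ∀ x ∈ Ω, W ∈ 𝓝 (x, (0 : F)) := by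
    intro x hx
    have hc : ContinuousAt (fderiv ℝ Φ) (x, 0) :=
      ((hΦc (x, 0) hx).fderiv_right (m := 0) (by simp)).continuousAt
    have h1 : ∀ᶠ p in 𝓝 (x, (0 : F)), fderiv ℝ Φ p ∈
        Set.range (ContinuousLinearEquiv.toContinuousLinearMap :
          ((E × F) ≃L[ℝ] (E × F)) → _) := by
      apply hc.eventually_mem
      refine ContinuousLinearEquiv.isOpen.mem_nhds ?_
      rw [(hΦd x hx).fderiv]
      exact ⟨_, rfl⟩
    have h2 : ∀ᶠ p in 𝓝 (x, (0 : F)), p.1 ∈ Ω :=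
      continuousAt_fst.eventually_mem (hΩo.mem_nhds hx)
    filter_upwards [h1, h2] with p hp1 hp2
    obtain ⟨e, he⟩ := hp1
    refine ⟨hp2, e, ?_⟩
    rw [he]
    exact ((hΦc p hp2).differentiableAt hn).hasFDerivAt
  set U := interior (t ∩ W) with hU
  have hUo : IsOpen U := isOpen_interior
  have hUs : U ⊆ t ∩ W := interior_subset
  obtain ⟨hop, Ψ, hΨ⟩ := thom_inverse Φ U hUo (htinj.mono fun p hp => (hUs hp).1)
    (fun p hp => hΦc p (hUs hp).2.1) (fun p hp => (hUs hp).2.2)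
  have hΦ0 : ∀ x : E, Φ (x, 0) = (x, 0) := fun x => by simp [hΦ]
  have hKU : ∀ x ∈ K, (x, (0 : F)) ∈ U := by
    intro x hx
    rw [hU, mem_interior_iff_mem_nhds]
    refine inter_mem ?_ (hWn x (hKΩ hx))
    exact mem_nhdsSet_iff_forall.1 ht _ ⟨hx, rfl⟩
  refine ⟨fun p => A p.1 (Ψ p).2, Φ '' U ∩ {p | (p.1, (0 : F)) ∈ U}, ?_, ?_, ?_, ?_⟩
  · exact hop.inter (hUo.preimage (by fun_prop))
  · intro x hx
    exact ⟨⟨(x, 0), hKU x hx, hΦ0 x⟩, hKU x hx⟩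
  · rintro p ⟨hp, hp0⟩
    obtain ⟨h1, h2, h3⟩ := hΨ p hp
    have hp1 : p.1 ∈ Ω := (hUs hp0).2.1
    refine ⟨?_, ?_⟩
    · have h4 : ContDiffAt ℝ ∞ (fun p : E × F => A p.1) p :=
        ContDiffAt.comp p (g := A) (hAc _ hp1) contDiffAt_fst
      exact h4.clm_apply (contDiffAt_snd.comp p h3)
    · have h5' : (Φ (Ψ p)).1 = p.1 := by rw [h2]
      have h5 : (Ψ p).1 = p.1 := h5'
      have h6' : (Φ (Ψ p)).2 = p.2 := by rw [h2]
      have h6 : f ((Ψ p).1 + A (Ψ p).1 (Ψ p).2) - f (Ψ p).1 = p.2 := h6'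
      rw [h5] at h6
      rw [← h6]; abel_nf
  · rintro x ⟨hp, hp0⟩
    obtain ⟨h1, h2, h3⟩ := hΨ _ hp
    have : Ψ (x, 0) = (x, 0) :=
      htinj (hUs h1).1 (hUs hp0).1 (h2.trans (hΦ0 x).symm)
    simp [this]

/-- Tube lemma for 1-jets. -/
theorem thom_tube (K : Set E) (hK : IsCompact K) (Q : E → F → (E →L[ℝ] F) → Prop)
    (h : ∀ x ∈ K, ∀ᶠ p : (F × (E →L[ℝ] F)) × E in 𝓝 (((0 : F), (0 : E →L[ℝ] F)), x),
      Q p.2 p.1.1 p.1.2) :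
    ∃ ε > (0 : ℝ), ∀ x ∈ K, ∀ w L, ‖w‖ < ε → ‖L‖ < ε → Q x w L := by
  have := hK.eventually_forall_of_forall_eventually
    (x₀ := ((0 : F), (0 : E →L[ℝ] F))) (P := fun j x => Q x j.1 j.2) h
  obtain ⟨ε, hε, hb⟩ := Metric.eventually_nhds_iff.1 this
  refine ⟨ε, hε, fun x hx w L hw hL => ?_⟩
  refine hb (y := (w, L)) ?_ x hx
  rw [Prod.dist_eq]
  simpa using ⟨hw, hL⟩

/-- A smooth perturbation of the identity with small derivative is a diffeomorphism. -/
theorem thom_perturb (P : E → E) (hP : ContDiff ℝ ∞ P) (hd : ∀ x, ‖fderiv ℝ P x‖ < 1 / 2) :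
    ∃ ψ : E ≃ₜ E, (∀ x, ψ x = x + P x) ∧ ContDiff ℝ ∞ ψ ∧ ContDiff ℝ ∞ ψ.symm := by
  have := FiniteDimensional.complete ℝ E
  have hn : (∞ : WithTop ℕ∞) ≠ 0 := by simp
  have hlip : LipschitzWith (1 / 2) P := by
    refine lipschitzWith_of_nnnorm_fderiv_le (𝕜 := ℝ) (hP.differentiable hn) fun x => ?_
    rw [← NNReal.coe_le_coe]
    simpa using (hd x).le
  have happ : ApproximatesLinearOn (fun x => x + P x)
      ((ContinuousLinearEquiv.refl ℝ E : E ≃L[ℝ] E) : E →L[ℝ] E) univ (1 / 2) := by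
    intro x _ y _
    have := hlip.dist_le_mul x y
    rw [dist_eq_norm, dist_eq_norm] at this
    have h2 : x + P x - (y + P y) - (x - y) = P x - P y := by abel
    change ‖x + P x - (y + P y) - (x - y)‖ ≤ _
    rw [h2]
    exact this
  have hc : Subsingleton E ∨ (1 / 2 : NNReal) <
      ‖((ContinuousLinearEquiv.refl ℝ E).symm : E →L[ℝ] E)‖₊⁻¹ := by
    rcases subsingleton_or_nontrivial E with h | h
    · exact Or.inl h
    · right
      have : ‖((ContinuousLinearEquiv.refl ℝ E).symm : E →L[ℝ] E)‖₊ = 1 :=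
        ContinuousLinearMap.nnnorm_id
      rw [this, inv_one]
      exact NNReal.half_lt_self one_ne_zero
  let ψ : E ≃ₜ E := happ.toHomeomorph _ hc
  have hψ : ∀ x, ψ x = x + P x := fun x => rfl
  have hψc : ContDiff ℝ ∞ ψ := contDiff_id.add hP
  refine ⟨ψ, hψ, hψc, ?_⟩
  have hder : ∀ x, ∃ e : E ≃L[ℝ] E, HasFDerivAt ψ (e : E →L[ℝ] E) x := by
    intro x
    have h1 : HasFDerivAt ψ (ContinuousLinearMap.id ℝ E + fderiv ℝ P x) x :=
      (hasFDerivAt_id x).add (hP.differentiable hn x).hasFDerivAt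
    have hlt : ‖-fderiv ℝ P x‖ < 1 := by rw [norm_neg]; linarith [hd x]
    refine ⟨ContinuousLinearEquiv.ofUnit (Units.oneSub _ hlt), h1.congr_fderiv ?_⟩
    ext v
    have : (ContinuousLinearEquiv.ofUnit (Units.oneSub (-fderiv ℝ P x) hlt)) v
      = (1 - (-fderiv ℝ P x)) v := rfl
    simp [this]
  choose e he using hder
  exact ψ.contDiff_symm he hψc

end ThomAux

/-- The main construction in abstract form. -/
theorem thom_main {E F : Type*} [NormedAddCommGroup E] [InnerProductSpace ℝ E]
    [FiniteDimensional ℝ E]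
    [NormedAddCommGroup F] [InnerProductSpace ℝ F] [FiniteDimensional ℝ F]
    (R : ℝ) (f : E → F) (hf : ContDiff ℝ ∞ f)
    (htrans : ∀ x ∈ closedBall (0 : E) R, f x = 0 → Function.Surjective (fderiv ℝ f x))
    (Z : Set E) (hZ : Z = {x ∈ closedBall (0 : E) R | f x = 0})
    (hZsub : Z ⊆ ball (0 : E) R) :
    ∃ ε > (0 : ℝ), ∀ g : E → F, ContDiff ℝ ∞ g →
      (∀ x ∈ closedBall (0 : E) R, ‖g x - f x‖ + ‖fderiv ℝ g x - fderiv ℝ f x‖ < ε) →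
      (∀ x ∈ ball (0 : E) R, g x = 0 → Function.Surjective (fderiv ℝ g x)) ∧
      ∃ φ : E ≃ₜ E, ContDiff ℝ ∞ φ ∧ ContDiff ℝ ∞ φ.symm ∧
        φ '' Z = {x ∈ ball (0 : E) R | g x = 0} := by
  have := FiniteDimensional.complete ℝ E
  have := FiniteDimensional.complete ℝ F
  have := FiniteDimensional.proper ℝ E
  have hn : (∞ : WithTop ℕ∞) ≠ 0 := by simp
  have hfc : Continuous f := hf.continuous
  have hDf : Continuous (fderiv ℝ f) := hf.continuous_fderiv hn
  have hB : IsCompact (closedBall (0 : E) R) := isCompact_closedBall 0 R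
  have hZc : IsCompact Z := by
    have : Z = closedBall (0 : E) R ∩ f ⁻¹' {0} := by rw [hZ]; rfl
    rw [this]
    exact hB.inter_right (isClosed_singleton.preimage hfc)
  have hZcl : IsClosed Z := hZc.isClosed
  set Ω : Set E := ball (0 : E) R ∩ (fderiv ℝ f) ⁻¹' {D | Function.Surjective D} with hΩdef
  have hΩo : IsOpen Ω := isOpen_ball.inter (thom_isOpen_surj.preimage hDf)
  have hZΩ : Z ⊆ Ω := by
    intro x hx
    refine ⟨hZsub hx, ?_⟩
    rw [hZ] at hx
    exact htrans x hx.1 hx.2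
  obtain ⟨K, hKc, hZK, hKΩ⟩ := exists_compact_between hZc hΩo hZΩ
  obtain ⟨χ0, hχ1, hχ0, -⟩ := exists_contMDiffMap_one_nhds_of_subset_interior
    (n := ⊤) (modelWithCornersSelf ℝ E) hZcl hZK
  obtain ⟨χ, hχdef⟩ : ∃ χ : E → ℝ, χ = fun x => χ0 x := ⟨_, rfl⟩
  have hχc : ContDiff ℝ ∞ χ := by rw [hχdef]; exact χ0.contMDiff.contDiff
  have hχ1 : ∀ z ∈ Z, ∀ᶠ x in 𝓝 z, χ x = 1 := by
    rw [hχdef]; exact eventually_nhdsSet_iff_forall.1 hχ1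
  have hχ0 : ∀ x ∉ K, χ x = 0 := by rw [hχdef]; exact hχ0
  obtain ⟨H, V, hVo, hKV, hH, hH0⟩ := thom_solver f hf Ω hΩo (fun x hx => hx.2) K hKc hKΩ
  set T : E × F → E := fun p => χ p.1 • H p with hT
  have hTc : ∀ p ∈ V, ContDiffAt ℝ ∞ T p := fun p hp =>
    (hχc.contDiffAt.comp p contDiffAt_fst).smul (hH p hp).1
  have hT0 : ∀ x ∈ K, T (x, 0) = 0 := fun x hx => by simp [hT, hH0 x (hKV x hx)]
  have hpx : ∀ x : E, Tendsto (fun p : (F × (E →L[ℝ] F)) × E => p.2)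
      (𝓝 (((0 : F), (0 : E →L[ℝ] F)), x)) (𝓝 x) := fun x => continuousAt_snd
  have hpw : ∀ x : E, Tendsto (fun p : (F × (E →L[ℝ] F)) × E => p.1.1)
      (𝓝 (((0 : F), (0 : E →L[ℝ] F)), x)) (𝓝 0) := fun x =>
    (continuous_fst.comp continuous_fst).continuousAt
  have hpL : ∀ x : E, Tendsto (fun p : (F × (E →L[ℝ] F)) × E => p.1.2)
      (𝓝 (((0 : F), (0 : E →L[ℝ] F)), x)) (𝓝 0) := fun x =>
    (continuous_snd.comp continuous_fst).continuousAt
  have hpxw : ∀ x : E, Tendsto (fun p : (F × (E →L[ℝ] F)) × E => (p.2, p.1.1))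
      (𝓝 (((0 : F), (0 : E →L[ℝ] F)), x)) (𝓝 (x, 0)) := fun x =>
    (hpx x).prodMk_nhds (hpw x)
  have hpf : ∀ x : E, Tendsto (fun p : (F × (E →L[ℝ] F)) × E => f p.2 + p.1.1)
      (𝓝 (((0 : F), (0 : E →L[ℝ] F)), x)) (𝓝 (f x)) := fun x => by
    simpa using ((hfc.tendsto x).comp (hpx x)).add (hpw x)
  have hpT : ∀ x ∈ K, Tendsto (fun p : (F × (E →L[ℝ] F)) × E => p.2 + T (p.2, p.1.1))
      (𝓝 (((0 : F), (0 : E →L[ℝ] F)), x)) (𝓝 x) := fun x hx => by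
    have h1 : Tendsto T (𝓝 (x, 0)) (𝓝 0) := by
      have := (hTc _ (hKV x hx)).continuousAt.tendsto
      rwa [hT0 x hx] at this
    simpa using (hpx x).add (h1.comp (hpxw x))
  obtain ⟨ε₁, hε₁, hQ₁⟩ := thom_tube (closedBall (0 : E) R) hB
    (fun x w L => f x + w = 0 → Function.Surjective (fderiv ℝ f x + L) ∧ χ x = 1) (by
      intro x hx
      by_cases h0 : f x = 0
      · have hxZ : x ∈ Z := by rw [hZ]; exact ⟨hx, h0⟩
        have h1 : Tendsto (fun p : (F × (E →L[ℝ] F)) × E => fderiv ℝ f p.2 + p.1.2)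
            (𝓝 (((0 : F), (0 : E →L[ℝ] F)), x)) (𝓝 (fderiv ℝ f x)) := by
          simpa using ((hDf.tendsto x).comp (hpx x)).add (hpL x)
        filter_upwards [h1.eventually_mem (thom_isOpen_surj.mem_nhds (htrans x hx h0)),
          (hpx x).eventually (hχ1 x hxZ)] with p hp1 hp2 _
        exact ⟨hp1, hp2⟩
      · filter_upwards [(hpf x).eventually_ne h0] with p hp hp'
        exact absurd hp' hp)
  obtain ⟨ε₂, hε₂, hQ₂⟩ := thom_tube K hKc
    (fun x w L => (x, w) ∈ V ∧ x + T (x, w) ∈ ball (0 : E) R ∧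
      (x + T (x, w) ∈ Z → χ x = 1) ∧
      ‖(fderiv ℝ T (x, w)).comp ((ContinuousLinearMap.id ℝ E).prod L)‖ < 1 / 2) (by
      intro x hx
      have hcd : ContDiffAt ℝ ∞ T (x, 0) := hTc _ (hKV x hx)
      have h1 := (hpxw x).eventually_mem (hVo.mem_nhds (hKV x hx))
      have h2 := (hpT x hx).eventually_mem (isOpen_ball.mem_nhds (hKΩ hx).1)
      have h3 : ∀ᶠ p : (F × (E →L[ℝ] F)) × E in 𝓝 (((0 : F), (0 : E →L[ℝ] F)), x),
          p.2 + T (p.2, p.1.1) ∈ Z → χ p.2 = 1 := by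
        by_cases hxZ : x ∈ Z
        · filter_upwards [(hpx x).eventually (hχ1 x hxZ)] with p hp _ using hp
        · filter_upwards [(hpT x hx).eventually_mem (hZcl.isOpen_compl.mem_nhds hxZ)]
            with p hp hp'
          exact absurd hp' hp
      have h4 : Tendsto (fun p : (F × (E →L[ℝ] F)) × E =>
          ‖(fderiv ℝ T (p.2, p.1.1)).comp ((ContinuousLinearMap.id ℝ E).prod p.1.2)‖)
          (𝓝 (((0 : F), (0 : E →L[ℝ] F)), x)) (𝓝 0) := by
        have hz : (fderiv ℝ T (x, 0)).comp
            ((ContinuousLinearMap.id ℝ E).prod (0 : E →L[ℝ] F)) = 0 := by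
          have ha : HasFDerivAt (fun y : E => T (y, (0 : F))) ((fderiv ℝ T (x, 0)).comp
              ((ContinuousLinearMap.id ℝ E).prod (0 : E →L[ℝ] F))) x :=
            HasFDerivAt.comp (g := T) (f := fun y : E => (y, (0 : F))) x
              (hcd.differentiableAt hn).hasFDerivAt
              ((hasFDerivAt_id x).prodMk (hasFDerivAt_const 0 x))
          have hb : HasFDerivAt (fun y : E => T (y, (0 : F))) (0 : E →L[ℝ] E) x := by
            refine (hasFDerivAt_const (0 : E) x).congr_of_eventuallyEq ?_
            have : ∀ᶠ y in 𝓝 x, (y, (0 : F)) ∈ V :=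
              ContinuousAt.eventually_mem (f := fun y : E => (y, (0 : F))) (by fun_prop)
                (hVo.mem_nhds (hKV x hx))
            filter_upwards [this] with y hy
            simp [hT, hH0 y hy]
          exact ha.unique hb
        have hc1 : Tendsto (fderiv ℝ T) (𝓝 (x, 0)) (𝓝 (fderiv ℝ T (x, 0))) :=
          (hcd.fderiv_right (m := 0) (by simp)).continuousAt
        have hc2 : Tendsto (fun p : (F × (E →L[ℝ] F)) × E =>
            (ContinuousLinearMap.id ℝ E).prod p.1.2)
            (𝓝 (((0 : F), (0 : E →L[ℝ] F)), x))
            (𝓝 ((ContinuousLinearMap.id ℝ E).prod (0 : E →L[ℝ] F))) := by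
          have : Continuous (fun L : E →L[ℝ] F => (ContinuousLinearMap.id ℝ E).prod L) := by
            have h := (ContinuousLinearMap.prodₗᵢ ℝ (E := E) (F := E) (G := F) (𝕜 := ℝ)).continuous
            exact h.comp (Continuous.prodMk continuous_const continuous_id)
          exact (this.tendsto 0).comp (hpL x)
        have hcc : Continuous (fun q : ((E × F) →L[ℝ] E) × (E →L[ℝ] (E × F)) => q.1.comp q.2) :=
          continuous_fst.clm_comp continuous_snd
        have := ((hcc.tendsto _).comp ((hc1.comp (hpxw x)).prodMk_nhds hc2)).norm
        rwa [hz, norm_zero] at this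
      filter_upwards [h1, h2, h3, h4.eventually_lt_const (by norm_num : (0 : ℝ) < 1 / 2)]
        with p a b c d
      exact ⟨a, b, c, d⟩)
  refine ⟨min ε₁ ε₂, lt_min hε₁ hε₂, fun g hg hgf => ?_⟩
  set h : E → F := fun x => g x - f x with hh
  have hhc : ContDiff ℝ ∞ h := hg.sub hf
  have hhd : ∀ x, fderiv ℝ h x = fderiv ℝ g x - fderiv ℝ f x := fun x =>
    fderiv_sub (hg.differentiable hn x) (hf.differentiable hn x)
  have hb1 : ∀ x ∈ closedBall (0 : E) R, ‖h x‖ < min ε₁ ε₂ := fun x hx =>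
    lt_of_le_of_lt (le_add_of_nonneg_right (norm_nonneg _)) (hgf x hx)
  have hb2 : ∀ x ∈ closedBall (0 : E) R, ‖fderiv ℝ h x‖ < min ε₁ ε₂ := fun x hx => by
    rw [hhd]
    exact lt_of_le_of_lt (le_add_of_nonneg_left (norm_nonneg _)) (hgf x hx)
  have hfg : ∀ x, f x + h x = g x := fun x => by simp [hh]
  have hP₁ : ∀ x ∈ closedBall (0 : E) R, g x = 0 →
      Function.Surjective (fderiv ℝ g x) ∧ χ x = 1 := by
    intro x hx hgx
    have := hQ₁ x hx (h x) (fderiv ℝ h x) ((hb1 x hx).trans_le (min_le_left _ _))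
      ((hb2 x hx).trans_le (min_le_left _ _)) ((hfg x).trans hgx)
    rwa [hhd, add_sub_cancel] at this
  have hKB : K ⊆ closedBall (0 : E) R := fun x hx => ball_subset_closedBall (hKΩ hx).1
  have hP₂ := fun x (hx : x ∈ K) => hQ₂ x hx (h x) (fderiv ℝ h x)
    ((hb1 x (hKB hx)).trans_le (min_le_right _ _)) ((hb2 x (hKB hx)).trans_le (min_le_right _ _))
  refine ⟨fun x hx hgx => (hP₁ x (ball_subset_closedBall hx) hgx).1, ?_⟩
  set P : E → E := fun x => T (x, h x) with hPdef
  have hPoff : ∀ x ∉ K, P x = 0 := fun x hx => by simp [hPdef, hT, hχ0 x hx]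
  have hPoff' : ∀ x ∉ K, P =ᶠ[𝓝 x] fun _ => 0 := fun x hx => by
    filter_upwards [hKc.isClosed.isOpen_compl.mem_nhds hx] with y hy using hPoff y hy
  have hPc : ContDiff ℝ ∞ P := by
    rw [contDiff_iff_contDiffAt]
    intro x
    by_cases hx : x ∈ K
    · exact ContDiffAt.comp x (g := T) (f := fun y => (y, h y)) (hTc _ (hP₂ x hx).1)
        (contDiffAt_id.prodMk hhc.contDiffAt)
    · exact contDiffAt_const.congr_of_eventuallyEq (hPoff' x hx)
  have hPd : ∀ x, ‖fderiv ℝ P x‖ < 1 / 2 := by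
    intro x
    by_cases hx : x ∈ K
    · have ha : HasFDerivAt P ((fderiv ℝ T (x, h x)).comp
          ((ContinuousLinearMap.id ℝ E).prod (fderiv ℝ h x))) x :=
        HasFDerivAt.comp (g := T) (f := fun y : E => (y, h y)) x
          ((hTc _ (hP₂ x hx).1).differentiableAt hn).hasFDerivAt
          ((hasFDerivAt_id x).prodMk (hhc.differentiable hn x).hasFDerivAt)
      rw [ha.fderiv]
      exact (hP₂ x hx).2.2.2
    · rw [(hPoff' x hx).fderiv_eq]
      simp
  obtain ⟨ψ, hψ, hψc, hψsc⟩ := thom_perturb P hPc hPd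
  have hkey : ∀ x ∈ K, χ x = 1 → f (ψ x) = g x := by
    intro x hx h1
    have := (hH _ (hP₂ x hx).1).2
    rw [hψ, ← hfg x, ← this]
    simp [hPdef, hT, h1]
  refine ⟨ψ.symm, hψsc, hψc, ?_⟩
  ext x
  constructor
  · rintro ⟨z, hz, rfl⟩
    set x := ψ.symm z with hx
    have hxz : ψ x = z := ψ.apply_symm_apply z
    have hxK : x ∈ K := by
      by_contra hxK
      have h1 := hψ x
      rw [hPoff x hxK, add_zero, hxz] at h1
      exact hxK (h1 ▸ interior_subset (hZK hz))
    have h1 : χ x = 1 := (hP₂ x hxK).2.2.1 (by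
      have := hψ x
      rw [hxz] at this
      change x + P x ∈ Z
      rwa [← this])
    refine ⟨(hKΩ hxK).1, ?_⟩
    rw [← hkey x hxK h1, hxz]
    rw [hZ] at hz
    exact hz.2
  · rintro ⟨hx, hgx⟩
    have h1 := (hP₁ x (ball_subset_closedBall hx) hgx).2
    have hxK : x ∈ K := by
      by_contra hxK
      rw [hχ0 x hxK] at h1
      exact zero_ne_one h1
    refine ⟨ψ x, ?_, ψ.symm_apply_apply x⟩
    rw [hZ]
    refine ⟨?_, (hkey x hxK h1).trans hgx⟩
    rw [hψ]
    exact ball_subset_closedBall (hP₂ x hxK).2.1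

/-- Thom isotopy / stability: if `f : ℝ^n → ℝ^r` is smooth, vanishes transversally, and
its zero set `Z` inside the closed ball `B̄(0,R)` is compact and contained in the open
ball, then any `g` sufficiently `C¹`-close to `f` on `B̄(0,R)` also vanishes
transversally on `B(0,R)` and its zero set there is diffeomorphic to `Z` (indeed by an
ambient diffeomorphism of `ℝ^n`). -/
theorem thom_stability (n r : ℕ) (R : ℝ) (hR : 0 < R)
    (f : EuclideanSpace ℝ (Fin n) → EuclideanSpace ℝ (Fin r))
    (hf : ContDiff ℝ (⊤ : ℕ∞) f)
    (htrans : ∀ x ∈ closedBall (0 : EuclideanSpace ℝ (Fin n)) R, f x = 0 →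
      Function.Surjective (fderiv ℝ f x))
    (Z : Set (EuclideanSpace ℝ (Fin n)))
    (hZ : Z = {x ∈ closedBall (0 : EuclideanSpace ℝ (Fin n)) R | f x = 0})
    (hZsub : Z ⊆ ball (0 : EuclideanSpace ℝ (Fin n)) R) :
    ∃ ε > (0 : ℝ), ∀ g : EuclideanSpace ℝ (Fin n) → EuclideanSpace ℝ (Fin r),
      ContDiff ℝ (⊤ : ℕ∞) g →
      (∀ x ∈ closedBall (0 : EuclideanSpace ℝ (Fin n)) R,
        ‖g x - f x‖ + ‖fderiv ℝ g x - fderiv ℝ f x‖ < ε) →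
      (∀ x ∈ ball (0 : EuclideanSpace ℝ (Fin n)) R, g x = 0 →
        Function.Surjective (fderiv ℝ g x)) ∧
      ∃ φ : EuclideanSpace ℝ (Fin n) ≃ₜ EuclideanSpace ℝ (Fin n),
        ContDiff ℝ (⊤ : ℕ∞) φ ∧ ContDiff ℝ (⊤ : ℕ∞) φ.symm ∧
        φ '' Z = {x ∈ ball (0 : EuclideanSpace ℝ (Fin n)) R | g x = 0} := by
  exact thom_main R f hf htrans Z hZ hZsub
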